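/- arXiv:1112.0161 — 2 statements merged into one kernel-verified Lean document; each statement's English description precedes it below -/
import Mathlib

section
/- Let Φ = (φ_1,...,φ_M) be a finite family of vectors in a vector space V with fundamental partition {F_1,...,F_ℓ}. Fix t < ℓ and choose any vector φ_k ∈ F_k where t < k. Then {F_1,...,F_t} contains a t-transversal T = {S_1,...,S_t} (with S_i ⊆ F_i and span(S_i) = span(S_j) for all i,j ≤ t) such that φ_k ∈ span(S_i) for all i ∈ {1,...,t}. -/
/-!
Let `T` be the set of the first `t` colours, starting from the colouring of the vectors by their
part. Lift `φ m` out of its class. As long as some vector `φ x` is lifted out, trade it for a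
vector of a `T`-coloured class, with which it shares a circuit; this keeps the sizes of the
`T`-classes and the independence of all classes. If some lifted `φ x` could be added to a `T`-class
outright, the sizes would become lexicographically larger than those of the fundamental partition.
So `φ x` lies in the span of every `T`-class, and its support there consists of vectors that can
be lifted next. Hence, with `D` the set of all vectors that can ever be lifted, `φ x` lies in the
span of `F_i ∩ D` for every `i ≤ t`: trades inside `D` do not change this span.
The transversal is `S_i = F_i ∩ D`.
-/

/-- The sequence of part sizes of a partition `F : Fin ℓ → Finset (Fin M)`,
padded with zeros. -/
def PartSizes {M ℓ : ℕ} (F : Fin ℓ → Finset (Fin M)) : ℕ → ℕ :=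
  fun n => if h : n < ℓ then (F ⟨n, h⟩).card else 0

/-- Lexicographic order on sequences of naturals: `a ≤ₗₑₓ b`. -/
def LexLE (a b : ℕ → ℕ) : Prop :=
  a = b ∨ ∃ n, (∀ m < n, a m = b m) ∧ a n < b n

/-- `F : Fin ℓ → Finset (Fin M)` is an ordered partition of the index set `Ω`
into sets indexing linearly independent subfamilies of `φ`: the parts are
nonempty, pairwise disjoint, cover `Ω`, each part indexes a linearly
independent subfamily, and the part sizes are non-increasing. -/
def IsOrderedLIPartitionOn (K : Type*) {V : Type*} [Field K] [AddCommGroup V] [Module K V]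
    {M ℓ : ℕ} (φ : Fin M → V) (Ω : Finset (Fin M)) (F : Fin ℓ → Finset (Fin M)) : Prop :=
  (∀ i, (F i).Nonempty) ∧
  (∀ i j, i ≠ j → Disjoint (F i) (F j)) ∧
  (Finset.univ.biUnion F = Ω) ∧
  (∀ i, LinearIndependent K (fun x : {y : Fin M // y ∈ F i} => φ x.1)) ∧
  (∀ i j : Fin ℓ, i ≤ j → (F j).card ≤ (F i).card)

/-- A fundamental partition of the subfamily of `φ` indexed by `Ω`: an ordered
partition into linearly independent sets whose size sequence is
lexicographically maximal among all such ordered partitions. -/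
def IsFundamentalOn (K : Type*) {V : Type*} [Field K] [AddCommGroup V] [Module K V]
    {M ℓ : ℕ} (φ : Fin M → V) (Ω : Finset (Fin M)) (F : Fin ℓ → Finset (Fin M)) : Prop :=
  IsOrderedLIPartitionOn K φ Ω F ∧
  ∀ (k : ℕ) (P : Fin k → Finset (Fin M)),
    IsOrderedLIPartitionOn K φ Ω P → LexLE (PartSizes P) (PartSizes F)

open Finset Submodule Equiv

section Span

lemma mem_span_image_sep_of_linearIndepOn {R M ι : Type*} [Ring R] [AddCommGroup M]
    [Module R M] {v : ι → M}
    {s : Set ι} (hs : LinearIndepOn R v s) {x : M} (hx : x ∈ span R (v '' s)) :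
    x ∈ span R (v '' {y ∈ s | x ∉ span R (v '' (s \ {y}))}) := by
  obtain ⟨l, hl, rfl⟩ := (Finsupp.mem_span_image_iff_linearCombination R).1 hx
  refine (Finsupp.mem_span_image_iff_linearCombination R).2
    ⟨l, fun y hy => ⟨hl hy, fun hly => ?_⟩, rfl⟩
  obtain ⟨l', hl', heq⟩ := (Finsupp.mem_span_image_iff_linearCombination R).1 hly
  have hll' : l' = l :=
    linearIndepOn_iffₛ.1 hs l' (Finsupp.supported_mono Set.sdiff_subset hl') l hl heq
  exact (hl' (hll' ▸ hy)).2 rfl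

lemma span_insert_eq_span_insert_of_exchange {K V : Type*} [DivisionRing K] [AddCommGroup V]
    [Module K V] {s : Set V} {v w : V} (hv : v ∈ span K (insert w s)) (hvs : v ∉ span K s) :
    span K (insert v s) = span K (insert w s) := by
  refine le_antisymm (span_le.2 ?_) (span_le.2 ?_)
  · exact Set.insert_subset hv ((Set.subset_insert w s).trans subset_span)
  · exact Set.insert_subset (mem_span_insert_exchange hv hvs)
      ((Set.subset_insert v s).trans subset_span)

end Span

section Coloring

variable {α ι : Type*}

/-- The class of colour `i` of a colouring `c`, as a finite set: `colorClass c` is the partition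
into colour classes in the form expected by `IsOrderedLIPartitionOn`. -/
def colorClass [Fintype α] [DecidableEq ι] (c : α → ι) (i : ι) : Finset α :=
  {x | c x = i}

lemma coe_colorClass [Fintype α] [DecidableEq ι] (c : α → ι) (i : ι) :
    (colorClass c i : Set α) = c ⁻¹' {i} := by
  ext x
  simp [colorClass]

variable [DecidableEq α] {c : α → ι} {m y : α} {i : ι}

lemma preimage_comp_swap_right (h : c m ≠ c y) :
    (c ∘ swap m y) ⁻¹' {c y} = insert m (c ⁻¹' {c y} \ {y}) := by
  ext x
  simp only [Set.mem_preimage, Function.comp_apply, swap_apply_def, Set.mem_insert_iff,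
    Set.mem_sdiff, Set.mem_singleton_iff]
  grind

lemma preimage_comp_swap_left_sdiff (h : c m ≠ c y) :
    (c ∘ swap m y) ⁻¹' {c m} \ {y} = c ⁻¹' {c m} \ {m} := by
  ext x
  simp only [Set.mem_preimage, Function.comp_apply, swap_apply_def, Set.mem_sdiff,
    Set.mem_singleton_iff]
  grind

lemma preimage_comp_swap_of_ne (hm : c m ≠ i) (hy : c y ≠ i) :
    (c ∘ swap m y) ⁻¹' {i} = c ⁻¹' {i} := by
  ext x
  simp only [Set.mem_preimage, Function.comp_apply, swap_apply_def, Set.mem_singleton_iff]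
  grind

lemma linearIndepOn_update_preimage {K V : Type*} [DivisionRing K] [AddCommGroup V] [Module K V]
    {φ : α → V} (hc : ∀ j, LinearIndepOn K φ (c ⁻¹' {j} \ {m}))
    (hm : φ m ∉ span K (φ '' (c ⁻¹' {i} \ {m}))) (j : ι) :
    LinearIndepOn K φ (Function.update c m i ⁻¹' {j}) := by
  obtain rfl | hij := eq_or_ne i j
  · have hins : LinearIndepOn K φ (insert m (c ⁻¹' {i} \ {m})) :=
      linearIndepOn_insert_iff.2 ⟨hc i, fun hm' => absurd hm' hm⟩
    exact hins.mono fun x hx => by grind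
  · exact (hc j).mono fun x hx => by grind

end Coloring

section Exchange

variable (K : Type*) {V α ι : Type*} [DivisionRing K] [AddCommGroup V] [Module K V]
  [DecidableEq α] (φ : α → V) (T : Set ι)

/-- `ExchangeReachable K φ T c₀ m₀ c m`: from the colouring `c₀` with `m₀` lifted out of its class,
a chain of exchanges with elements of `T`-coloured classes leads to the colouring `c` with `m`
lifted out. The lifted element keeps the colour that `m₀` has in `c₀`; so an exchange is a swap of
colours, and the class of that colour has to be read without `m`. -/
inductive ExchangeReachable (c₀ : α → ι) (m₀ : α) : (α → ι) → α → Prop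
  | refl : ExchangeReachable c₀ m₀ c₀ m₀
  | exchange {c : α → ι} {m y : α} : ExchangeReachable c₀ m₀ c m → c y ∈ T →
      φ m ∉ span K (φ '' (c ⁻¹' {c y} \ {y})) → ExchangeReachable c₀ m₀ (c ∘ swap m y) y

/-- The elements that can be lifted out by a chain of exchanges starting with `m₀` lifted out
of `c₀`. -/
def exchangeSet (c₀ : α → ι) (m₀ : α) : Set α :=
  {m | ∃ c, ExchangeReachable K φ T c₀ m₀ c m}

namespace ExchangeReachable

variable {K φ T} {c₀ c : α → ι} {m₀ m : α} {i : ι}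

lemma color_eq (h : ExchangeReachable K φ T c₀ m₀ c m) : c m = c₀ m₀ := by
  induction h with
  | refl => rfl
  | exchange _ _ _ ih => simpa only [Function.comp_apply, swap_apply_right] using ih

lemma exists_perm (h : ExchangeReachable K φ T c₀ m₀ c m) : ∃ σ : Perm α, c = c₀ ∘ σ := by
  induction h with
  | refl => exact ⟨1, rfl⟩
  | @exchange c m y _ _ _ ih =>
    obtain ⟨σ, rfl⟩ := ih
    exact ⟨σ * swap m y, rfl⟩

lemma card_colorClass_eq [Fintype α] [DecidableEq ι] (h : ExchangeReachable K φ T c₀ m₀ c m)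
    (i : ι) : #(colorClass c i) = #(colorClass c₀ i) := by
  obtain ⟨σ, rfl⟩ := h.exists_perm
  exact card_equiv σ (by simp [colorClass])

lemma linearIndepOn_sdiff (h : ExchangeReachable K φ T c₀ m₀ c m) (hT : c₀ m₀ ∉ T)
    (hc₀ : ∀ i, LinearIndepOn K φ (c₀ ⁻¹' {i} \ {m₀})) (i : ι) :
    LinearIndepOn K φ (c ⁻¹' {i} \ {m}) := by
  induction h generalizing i with
  | refl => exact hc₀ i
  | @exchange c m y h hy hmy ih =>
    have hne : c m ≠ c y := fun heq => hT (h.color_eq ▸ heq ▸ hy)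
    obtain rfl | him := eq_or_ne (c m) i
    · rw [preimage_comp_swap_left_sdiff hne]
      exact ih (c m)
    obtain rfl | hiy := eq_or_ne (c y) i
    · rw [preimage_comp_swap_right hne]
      have hsub : c ⁻¹' {c y} \ {y} ⊆ c ⁻¹' {c y} \ {m} :=
        fun x hx => ⟨hx.1, fun hxm => hne (hxm ▸ hx.1)⟩
      exact (linearIndepOn_insert_iff.2 ⟨(ih (c y)).mono hsub, fun hm => absurd hm hmy⟩).mono
        Set.sdiff_subset
    · rw [preimage_comp_swap_of_ne him hiy]
      exact (ih i).mono fun x hx => ⟨hx.1, fun hxm => him (hxm ▸ hx.1)⟩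

lemma linearIndepOn (h : ExchangeReachable K φ T c₀ m₀ c m) (hT : c₀ m₀ ∉ T)
    (hc₀ : ∀ i, LinearIndepOn K φ (c₀ ⁻¹' {i} \ {m₀})) (hi : i ∈ T) :
    LinearIndepOn K φ (c ⁻¹' {i}) := by
  have hm : m ∉ c ⁻¹' {i} := fun hmi => hT (h.color_eq ▸ hmi ▸ hi)
  simpa only [Set.sdiff_singleton_eq_self hm] using h.linearIndepOn_sdiff hT hc₀ i

lemma mem_span_inter_exchangeSet (h : ExchangeReachable K φ T c₀ m₀ c m) (hT : c₀ m₀ ∉ T)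
    (hc₀ : ∀ i, LinearIndepOn K φ (c₀ ⁻¹' {i} \ {m₀})) (hi : i ∈ T)
    (hm : φ m ∈ span K (φ '' (c ⁻¹' {i}))) :
    φ m ∈ span K (φ '' (c ⁻¹' {i} ∩ exchangeSet K φ T c₀ m₀)) := by
  refine span_mono (Set.image_mono ?_)
    (mem_span_image_sep_of_linearIndepOn (h.linearIndepOn hT hc₀ hi) hm)
  rintro y ⟨rfl, hmy⟩
  exact ⟨rfl, _, h.exchange hi hmy⟩

lemma span_inter_exchangeSet_eq (h : ExchangeReachable K φ T c₀ m₀ c m) (hT : c₀ m₀ ∉ T)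
    (hc₀ : ∀ i, LinearIndepOn K φ (c₀ ⁻¹' {i} \ {m₀}))
    (hspan : ∀ c m, ExchangeReachable K φ T c₀ m₀ c m → ∀ i ∈ T, φ m ∈ span K (φ '' (c ⁻¹' {i})))
    (hi : i ∈ T) :
    span K (φ '' (c ⁻¹' {i} ∩ exchangeSet K φ T c₀ m₀)) =
      span K (φ '' (c₀ ⁻¹' {i} ∩ exchangeSet K φ T c₀ m₀)) := by
  induction h with
  | refl => rfl
  | @exchange c m y h hy hmy ih =>
    rw [← ih]
    have hmi : c m ≠ i := fun heq => hT (h.color_eq ▸ heq ▸ hi)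
    obtain rfl | hyi := eq_or_ne (c y) i
    · set D := exchangeSet K φ T c₀ m₀
      have hmD : m ∈ D := ⟨c, h⟩
      have hyD : y ∈ D := ⟨_, h.exchange hy hmy⟩
      have hm : φ m ∈ span K (φ '' (c ⁻¹' {c y} ∩ D)) :=
        h.mem_span_inter_exchangeSet hT hc₀ hi (hspan c m h _ hi)
      have hclass : c ⁻¹' {c y} ∩ D = insert y ((c ⁻¹' {c y} \ {y}) ∩ D) := by grind
      rw [hclass, Set.image_insert_eq] at hm
      rw [preimage_comp_swap_right hmi, Set.insert_inter_of_mem hmD, hclass, Set.image_insert_eq,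
        Set.image_insert_eq]
      exact span_insert_eq_span_insert_of_exchange hm fun hm' =>
        hmy (span_mono (Set.image_mono Set.inter_subset_left) hm')
    · rw [preimage_comp_swap_of_ne hmi hyi]

end ExchangeReachable

variable {K φ T}

lemma mem_span_inter_exchangeSet_of_mem {c₀ : α → ι} {m₀ x : α} {i : ι} (hT : c₀ m₀ ∉ T)
    (hc₀ : ∀ i, LinearIndepOn K φ (c₀ ⁻¹' {i} \ {m₀}))
    (hspan : ∀ c m, ExchangeReachable K φ T c₀ m₀ c m → ∀ i ∈ T, φ m ∈ span K (φ '' (c ⁻¹' {i})))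
    (hi : i ∈ T) (hx : x ∈ exchangeSet K φ T c₀ m₀) :
    φ x ∈ span K (φ '' (c₀ ⁻¹' {i} ∩ exchangeSet K φ T c₀ m₀)) := by
  obtain ⟨c, hc⟩ := hx
  rw [← hc.span_inter_exchangeSet_eq hT hc₀ hspan hi]
  exact hc.mem_span_inter_exchangeSet hT hc₀ hi (hspan c x hc i hi)

end Exchange

section LexOrder

lemma lexLE_iff_toLex_le {a b : ℕ → ℕ} : LexLE a b ↔ toLex a ≤ toLex b := by
  rw [le_iff_eq_or_lt]
  rfl

lemma LexLE.trans {a b c : ℕ → ℕ} (hab : LexLE a b) (hbc : LexLE b c) : LexLE a c := by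
  rw [lexLE_iff_toLex_le] at *
  exact hab.trans hbc

lemma exists_perm_antitone_and_toLex_le {ι β : Type*} [LinearOrder ι] [Finite ι] [LinearOrder β]
    (f : ι → β) : ∃ σ : Perm ι, Antitone (f ∘ σ) ∧ toLex f ≤ toLex (f ∘ σ) := by
  obtain ⟨σ, hσ⟩ := Finite.exists_max fun σ : Perm ι => toLex (f ∘ σ)
  refine ⟨σ, fun i j hij => not_lt.1 fun hlt => ?_, hσ 1⟩
  have hswap : toLex ((f ∘ σ ∘ swap i j) ∘ swap i j) < toLex (f ∘ σ ∘ swap i j) :=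
    Pi.lex_desc hij (by simpa using hlt)
  have hcancel : (f ∘ σ ∘ swap i j) ∘ swap i j = f ∘ σ := by
    ext x
    simp
  exact (hσ (σ * swap i j)).not_gt (hcancel ▸ hswap)

variable {M n : ℕ}

lemma partSizes_apply (F : Fin n → Finset (Fin M)) (i : Fin n) : PartSizes F i = #(F i) :=
  dif_pos i.isLt

lemma lexLE_partSizes_of_toLex_le {F G : Fin n → Finset (Fin M)}
    (h : toLex (fun i => #(F i)) ≤ toLex (fun i => #(G i))) :
    LexLE (PartSizes F) (PartSizes G) := by
  obtain heq | ⟨i, heq, hlt⟩ := le_iff_eq_or_lt.1 h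
  · left
    funext j
    unfold PartSizes
    split_ifs with hj
    · exact congrFun (toLex_inj.1 heq) ⟨j, hj⟩
    · rfl
  · refine Or.inr ⟨i, fun j hj => ?_, ?_⟩
    · rw [partSizes_apply F ⟨j, hj.trans i.isLt⟩, partSizes_apply G ⟨j, hj.trans i.isLt⟩]
      exact heq ⟨j, hj.trans i.isLt⟩ hj
    · rw [partSizes_apply, partSizes_apply]
      exact hlt

lemma not_lexLE_partSizes_of_lt {F G : Fin n → Finset (Fin M)} {t : ℕ} {p : Fin n}
    (hle : ∀ i : Fin n, i < t → #(F i) ≤ #(G i)) (hp : p < t) (hlt : #(F p) < #(G p)) :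
    ¬ LexLE (PartSizes G) (PartSizes F) := by
  have hle' (j : ℕ) (hj : j < t) : PartSizes F j ≤ PartSizes G j := by
    unfold PartSizes
    split_ifs with hjn
    · exact hle ⟨j, hjn⟩ hj
    · rfl
  have hlt' : PartSizes F p < PartSizes G p := by simpa only [partSizes_apply] using hlt
  rintro (heq | ⟨q, heq, hq⟩)
  · exact hlt'.ne' (congrFun heq p)
  · obtain hqt | htq := lt_or_ge q t
    · exact hq.not_ge (hle' q hqt)
    · exact hlt'.ne' (heq p (hp.trans_le htq))

end LexOrder

section Fundamental

variable {K V : Type*} [Field K] [AddCommGroup V] [Module K V] {M ℓ n : ℕ} {φ : Fin M → V}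
  {Ω : Finset (Fin M)}

lemma exists_isOrderedLIPartitionOn_of_antitone {G : Fin n → Finset (Fin M)}
    (hdisj : ∀ i j, i ≠ j → Disjoint (G i) (G j)) (hunion : univ.biUnion G = Ω)
    (hLI : ∀ i, LinearIndepOn K φ (G i : Set (Fin M))) (hanti : Antitone fun i => #(G i)) :
    ∃ (r : ℕ) (P : Fin r → Finset (Fin M)),
      IsOrderedLIPartitionOn K φ Ω P ∧ PartSizes P = PartSizes G := by
  set r := #{i | 0 < #(G i)}
  have hlt (i : Fin n) : (i : ℕ) < r ↔ (G i).Nonempty :=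
    (Tuple.lt_card_gt_iff_apply_gt_of_antitone hanti).trans card_pos
  have hr : r ≤ n := (card_filter_le _ _).trans_eq (by simp)
  refine ⟨r, fun i => G (Fin.castLE hr i), ⟨fun i => (hlt _).1 i.isLt,
    fun i j hij => hdisj _ _ ((Fin.castLE_injective hr).ne hij), ?_, fun i => hLI _,
    fun i j hij => hanti hij⟩, ?_⟩
  · refine hunion ▸ Subset.antisymm (fun x hx => ?_) (fun x hx => ?_)
    · obtain ⟨i, -, hi⟩ := mem_biUnion.1 hx
      exact mem_biUnion.2 ⟨_, mem_univ _, hi⟩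
    · obtain ⟨i, -, hi⟩ := mem_biUnion.1 hx
      exact mem_biUnion.2 ⟨⟨i, (hlt i).2 ⟨x, hi⟩⟩, mem_univ _, hi⟩
  · funext j
    unfold PartSizes
    by_cases hjr : j < r
    · simp only [hjr, hjr.trans_le hr, dite_true, Fin.castLE_mk]
    · by_cases hjn : j < n
      · have hempty := (hlt ⟨j, hjn⟩).not.1 hjr
        simp only [hjr, hjn, dite_true, dite_false, not_nonempty_iff_eq_empty.1 hempty, card_empty]
      · simp only [hjr, hjn, dite_false]

lemma IsFundamentalOn.lexLE_partSizes {F : Fin ℓ → Finset (Fin M)} (hF : IsFundamentalOn K φ Ω F)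
    {G : Fin n → Finset (Fin M)} (hdisj : ∀ i j, i ≠ j → Disjoint (G i) (G j))
    (hunion : univ.biUnion G = Ω) (hLI : ∀ i, LinearIndepOn K φ (G i : Set (Fin M))) :
    LexLE (PartSizes G) (PartSizes F) := by
  obtain ⟨σ, hanti, hle⟩ := exists_perm_antitone_and_toLex_le fun i => #(G i)
  have hunion' : univ.biUnion (G ∘ σ) = Ω := by
    rw [← hunion]
    ext x
    simpa only [mem_biUnion, mem_univ, true_and, Function.comp_apply] using
      (σ.surjective.exists (p := fun i => x ∈ G i)).symm
  obtain ⟨r, P, hP, hsizes⟩ := exists_isOrderedLIPartitionOn_of_antitone (G := G ∘ σ)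
    (fun i j hij => hdisj _ _ (σ.injective.ne hij)) hunion' (fun i => hLI (σ i)) hanti
  have hG : LexLE (PartSizes G) (PartSizes (G ∘ σ)) := lexLE_partSizes_of_toLex_le hle
  exact hG.trans (hsizes ▸ hF.2 r P hP)

lemma IsOrderedLIPartitionOn.exists_eq_colorClass {F : Fin ℓ → Finset (Fin M)}
    (hF : IsOrderedLIPartitionOn K φ univ F) : ∃ c : Fin M → Fin ℓ, F = colorClass c := by
  obtain ⟨-, hdisj, hunion, -, -⟩ := hF
  have hcover (x : Fin M) : ∃ i, x ∈ F i := by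
    simpa only [mem_biUnion, mem_univ, true_and] using hunion.ge (mem_univ x)
  choose c hc using hcover
  refine ⟨c, ?_⟩
  ext i x
  simp only [colorClass, mem_filter, mem_univ, true_and]
  refine ⟨fun hx => ?_, fun hx => hx ▸ hc x⟩
  by_contra hne
  exact disjoint_left.1 (hdisj _ _ hne) (hc x) hx

lemma IsOrderedLIPartitionOn.linearIndepOn_preimage {c : Fin M → Fin ℓ}
    (hc : IsOrderedLIPartitionOn K φ Ω (colorClass c)) (i : Fin ℓ) :
    LinearIndepOn K φ (c ⁻¹' {i}) :=
  coe_colorClass c i ▸ hc.2.2.2.1 i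

lemma IsFundamentalOn.lexLE_partSizes_colorClass {F : Fin ℓ → Finset (Fin M)}
    (hF : IsFundamentalOn K φ univ F) {c : Fin M → Fin n}
    (hc : ∀ i, LinearIndepOn K φ (c ⁻¹' {i})) :
    LexLE (PartSizes (colorClass c)) (PartSizes F) := by
  refine hF.lexLE_partSizes (fun i j hij => ?_) ?_ fun i => ?_
  · exact disjoint_filter.2 fun x _ hi hj => hij (hi.symm.trans hj)
  · ext x
    simp [colorClass]
  · exact (coe_colorClass c i).symm ▸ hc i

lemma IsFundamentalOn.mem_span_of_exchangeReachable {c₀ c : Fin M → Fin ℓ} {m₀ m : Fin M} {t : ℕ}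
    (hF : IsFundamentalOn K φ univ (colorClass c₀)) (hm₀ : t ≤ c₀ m₀)
    (h : ExchangeReachable K φ {i : Fin ℓ | i < t} c₀ m₀ c m) {i : Fin ℓ} (hi : i < t) :
    φ m ∈ span K (φ '' (c ⁻¹' {i})) := by
  by_contra hm
  set c' := Function.update c m i
  have hcm : t ≤ c m := h.color_eq ▸ hm₀
  have hLI (j : Fin ℓ) : LinearIndepOn K φ (c' ⁻¹' {j}) :=
    linearIndepOn_update_preimage
      (h.linearIndepOn_sdiff hm₀.not_gt fun i =>
        (hF.1.linearIndepOn_preimage i).mono Set.sdiff_subset)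
      (fun hm' => hm (span_mono (Set.image_mono Set.sdiff_subset) hm')) j
  have hsub (j : Fin ℓ) (hj : j < t) : colorClass c j ⊆ colorClass c' j := by
    intro x
    grind [colorClass]
  have hssub : colorClass c i ⊂ colorClass c' i := by
    refine (ssubset_iff_of_subset (hsub i hi)).2 ⟨m, ?_, ?_⟩ <;> grind [colorClass]
  refine not_lexLE_partSizes_of_lt (fun j hj => ?_) hi ?_ (hF.lexLE_partSizes_colorClass hLI)
  · exact h.card_colorClass_eq j ▸ card_le_card (hsub j hj)
  · exact h.card_colorClass_eq i ▸ card_lt_card hssub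

end Fundamental

/-- Existence of transversals.  Let `{F_1,…,F_ℓ}` be a fundamental partition of
`Φ`, fix `t < ℓ`, and choose any `φ_m ∈ F_k` with `t < k` (0-based: `t ≤ k`).
Then `{F_1,…,F_t}` contains a `t`-transversal `T = {S_1,…,S_t}`, i.e.
`S_i ⊆ F_i` with all spans equal, such that `φ_m ∈ span(S_i)` for every `i`. -/
theorem exists_transversal {K V : Type*} [Field K] [AddCommGroup V] [Module K V]
    {M ℓ : ℕ} (φ : Fin M → V) (F : Fin ℓ → Finset (Fin M))
    (hF : IsFundamentalOn K φ Finset.univ F)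
    (t : ℕ) (ht : t < ℓ) (k : Fin ℓ) (htk : t ≤ (k : ℕ)) (m : Fin M) (hm : m ∈ F k) :
    ∃ S : Fin t → Finset (Fin M),
      (∀ i, S i ⊆ F (Fin.castLE ht.le i)) ∧
      (∀ i j, Submodule.span K (φ '' ↑(S i)) = Submodule.span K (φ '' ↑(S j))) ∧
      (∀ i, φ m ∈ Submodule.span K (φ '' ↑(S i))) := by
  classical
  obtain ⟨c, rfl⟩ := hF.1.exists_eq_colorClass
  obtain rfl : c m = k := by simpa only [colorClass, mem_filter, mem_univ, true_and] using hm
  set D := exchangeSet K φ {i : Fin ℓ | i < t} c m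
  have hspan (i : Fin t) (x : Fin M) (hx : x ∈ D) :
      φ x ∈ span K (φ '' (c ⁻¹' {Fin.castLE ht.le i} ∩ D)) :=
    mem_span_inter_exchangeSet_of_mem htk.not_gt
      (fun j => (hF.1.linearIndepOn_preimage j).mono Set.sdiff_subset)
      (fun _ _ h _ hj => hF.mem_span_of_exchangeReachable htk h hj) i.isLt hx
  have hle (i j : Fin t) : span K (φ '' (c ⁻¹' {Fin.castLE ht.le i} ∩ D)) ≤
      span K (φ '' (c ⁻¹' {Fin.castLE ht.le j} ∩ D)) :=
    span_le.2 (Set.image_subset_iff.2 fun x hx => hspan j x hx.2)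
  have hcoe (i : Fin t) : (({x ∈ colorClass c (Fin.castLE ht.le i) | x ∈ D} : Finset (Fin M)) :
      Set (Fin M)) = c ⁻¹' {Fin.castLE ht.le i} ∩ D := by
    rw [coe_filter, ← coe_colorClass]
    rfl
  refine ⟨fun i => {x ∈ colorClass c (Fin.castLE ht.le i) | x ∈ D}, fun i => filter_subset _ _,
    fun i j => ?_, fun i => ?_⟩
  · simpa only [hcoe] using (hle i j).antisymm (hle j i)
  · simpa only [hcoe] using hspan i m ⟨c, .refl⟩
end

section
/- Let Φ = (φ_1,...,φ_M) be a finite family of vectors in a vector space V, and let k and L be nonnegative integers. Then the following are equivalent: (i) there exists a subset H of the index set with |H| = L such that the family indexed by the complement of H can be partitioned into k sets, each indexing a linearly independent subfamily; (ii) for every subset J of the index set, |J| − L ≤ k · dim span(φ_j : j ∈ J). -/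
/-! Take a partial colouring of the index set by `k` colours with linearly independent colour
classes, having as few uncoloured indices as possible. An uncoloured `e` depends on each colour
class, and recolouring `e` with `i` may uncolour any element of its fundamental circuit in class `i`
instead. Let `D` be the set of indices that some sequence of such exchanges uncolours. Then `D`
contains the fundamental circuits of its elements, so each colour class spans `D` already within
`D`. Counting `D` by colours shows that it has exactly `k · dim span D` coloured elements, and
(ii) for `J = D` bounds the number of uncoloured ones by `L`. The argument only uses closures and
ranks, and works for independence in any matroids, one for each colour. -/

open Set Function Relation

section Preliminaries

variable {α β ι : Type*}

theorem preimage_update_singleton_self [DecidableEq α] (f : α → β) (a : α) (b : β) :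
    update f a b ⁻¹' {b} = insert a (f ⁻¹' {b}) := by
  ext x
  obtain rfl | hx := eq_or_ne x a <;> simp [*]

theorem preimage_update_singleton_of_ne [DecidableEq α] (f : α → β) (a : α) {b b' : β}
    (h : b' ≠ b) : update f a b ⁻¹' {b'} = f ⁻¹' {b'} \ {a} := by
  ext x
  obtain rfl | hx := eq_or_ne x a <;> simp [*, h.symm]

theorem encard_eq_sum_encard_preimage_inter [Fintype β] (f : α → β) (s : Set α) :
    s.encard = ∑ b, (f ⁻¹' {b} ∩ s).encard := by
  have hdisj : Pairwise (Disjoint on fun b ↦ f ⁻¹' {b} ∩ s) := fun _ _ h ↦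
    (pairwise_disjoint_fiber f h).mono inter_subset_left inter_subset_left
  rw [← finsum_eq_sum_of_fintype, ← encard_iUnion_of_finite hdisj, ← iUnion_inter,
    ← preimage_iUnion, iUnion_of_singleton, preimage_univ, univ_inter]

theorem encard_le_encard_add_sum_eRk [Fintype ι] {M : ι → Matroid α} {I : ι → Set α}
    (hI : ∀ i, (M i).Indep (I i)) {H J : Set α} (hJ : J ⊆ H ∪ ⋃ i, I i) :
    J.encard ≤ H.encard + ∑ i, (M i).eRk J := by
  have hcover : J ⊆ H ∪ ⋃ i, I i ∩ J := by
    rw [← iUnion_inter]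
    exact fun x hx ↦ (hJ hx).imp_right fun h ↦ ⟨h, hx⟩
  calc J.encard ≤ H.encard + (⋃ i, I i ∩ J).encard :=
        (encard_le_encard hcover).trans (encard_union_le ..)
    _ ≤ H.encard + ∑ i, (I i ∩ J).encard := by
        gcongr
        exact encard_iUnion_le_of_fintype _
    _ ≤ H.encard + ∑ i, (M i).eRk J := by
        gcongr with i
        exact ((hI i).inter_right J).encard_le_eRk_of_subset inter_subset_right

end Preliminaries

namespace PartialColoring

variable {α ι : Type*} {M : ι → Matroid α} {b c : α → Option ι} {e f : α} {i : ι}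

/-- A partial colouring of `α`, with value `none` at the uncoloured elements, each of whose colour
classes is independent in the matroid of that colour. -/
def IsIndepColoring (M : ι → Matroid α) (c : α → Option ι) : Prop :=
  ∀ i, (M i).Indep (c ⁻¹' {some i})

/-- An independent colouring with the least number of uncoloured elements. -/
def IsOptimalColoring (M : ι → Matroid α) : (α → Option ι) → Prop :=
  MinimalFor (IsIndepColoring M) fun c ↦ (c ⁻¹' {none}).encard

open Classical in
/-- The colouring obtained from `c` by giving `e` the colour `i` and uncolouring `f`. -/
noncomputable def exchange (c : α → Option ι) (e : α) (i : ι) (f : α) : α → Option ι :=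
  update (update c e (some i)) f none

/-- `IsExchange M c c'` means that the independent colouring `c'` arises from `c` by colouring an
uncoloured element and then uncolouring some element: the augmentation step of matroid partition. -/
def IsExchange (M : ι → Matroid α) (c c' : α → Option ι) : Prop :=
  IsIndepColoring M c' ∧ ∃ e i f, c e = none ∧ c' = exchange c e i f

/-- The set of elements left uncoloured by some colouring reachable from `c` by exchanges. -/
def exchangeable (M : ι → Matroid α) (c : α → Option ι) : Set α :=
  {x | ∃ b, ReflTransGen (IsExchange M) c b ∧ b x = none}

theorem preimage_exchange_some_self (c : α → Option ι) (e : α) (i : ι) (f : α) :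
    exchange c e i f ⁻¹' {some i} = insert e (c ⁻¹' {some i}) \ {f} := by
  classical
  rw [exchange, preimage_update_singleton_of_ne _ _ (by simp), preimage_update_singleton_self]

theorem preimage_exchange_some_subset_of_ne (c : α → Option ι) (e f : α) {i j : ι} (h : j ≠ i) :
    exchange c e i f ⁻¹' {some j} ⊆ c ⁻¹' {some j} := by
  classical
  rw [exchange, preimage_update_singleton_of_ne _ _ (by simp),
    preimage_update_singleton_of_ne _ _ (by simpa using h)]
  exact sdiff_subset.trans sdiff_subset

theorem encard_preimage_exchange_none_le (he : c e = none) (i : ι) (f : α) :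
    (exchange c e i f ⁻¹' {none}).encard ≤ (c ⁻¹' {none}).encard := by
  classical
  rw [exchange, preimage_update_singleton_self, preimage_update_singleton_of_ne _ _ (by simp),
    ← encard_sdiff_singleton_add_one (show e ∈ c ⁻¹' {none} from he)]
  exact encard_insert_le _ _

theorem IsIndepColoring.update [DecidableEq α] (hc : IsIndepColoring M c)
    (h : (M i).Indep (insert e (c ⁻¹' {some i}))) : IsIndepColoring M (update c e (some i)) := by
  intro j
  obtain rfl | hji := eq_or_ne j i
  · rwa [preimage_update_singleton_self]
  · rw [preimage_update_singleton_of_ne _ _ (by simpa using hji)]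
    exact (hc j).sdiff {e}

theorem IsIndepColoring.exchange (hc : IsIndepColoring M c)
    (h : (M i).Indep (insert e (c ⁻¹' {some i}) \ {f})) :
    IsIndepColoring M (exchange c e i f) := by
  intro j
  obtain rfl | hji := eq_or_ne j i
  · rwa [preimage_exchange_some_self]
  · exact (hc j).subset (preimage_exchange_some_subset_of_ne c e f hji)

theorem exists_isOptimalColoring (M : ι → Matroid α) : ∃ c, IsOptimalColoring M c :=
  exists_minimalFor_of_wellFoundedLT _ _ ⟨fun _ ↦ none, fun i ↦ by simp [preimage]⟩

namespace IsOptimalColoring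

theorem of_isExchange (hc : IsOptimalColoring M c) (h : IsExchange M c b) :
    IsOptimalColoring M b := by
  obtain ⟨hb, e, i, f, he, rfl⟩ := h
  have hle := encard_preimage_exchange_none_le he i f
  exact ⟨hb, fun c' hc' h' ↦ hle.trans (hc.2 hc' (h'.trans hle))⟩

theorem of_reflTransGen (hc : IsOptimalColoring M c) (h : ReflTransGen (IsExchange M) c b) :
    IsOptimalColoring M b := by
  induction h with
  | refl => exact hc
  | tail _ h ih => exact ih.of_isExchange h

variable [Finite α]

theorem mem_closure_preimage (hc : IsOptimalColoring M c) (he : c e = none) (heE : e ∈ (M i).E) :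
    e ∈ (M i).closure (c ⁻¹' {some i}) := by
  classical
  by_contra hcl
  have hins := ((hc.1 i).notMem_closure_iff heE).1 hcl
  have hlt : (update c e (some i) ⁻¹' {none}).encard < (c ⁻¹' {none}).encard := by
    rw [preimage_update_singleton_of_ne _ _ (by simp)]
    exact encard_strictMono (sdiff_singleton_ssubset.2 he)
  exact hlt.not_ge (hc.2 (hc.1.update hins.1) hlt.le)

theorem mem_closure_preimage_inter_exchangeable (hc : IsOptimalColoring M c)
    (hb : ReflTransGen (IsExchange M) c b) (he : b e = none) (heE : e ∈ (M i).E) :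
    e ∈ (M i).closure (b ⁻¹' {some i} ∩ exchangeable M c) := by
  have hopt := hc.of_reflTransGen hb
  have hcl := hopt.mem_closure_preimage he heE
  have heI : e ∉ b ⁻¹' {some i} := by simp [he]
  have hsub : (M i).fundCircuit e (b ⁻¹' {some i}) \ {e} ⊆ b ⁻¹' {some i} ∩ exchangeable M c := by
    rw [Matroid.fundCircuit_sdiff_eq_inter _ heI]
    rintro f ⟨hfC, hfI⟩
    have hex := hopt.1.exchange (((hopt.1 i).mem_fundCircuit_iff hcl heI).1 hfC)
    exact ⟨hfI, _, hb.tail ⟨hex, e, i, f, he, rfl⟩, by simp [exchange]⟩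
  exact (M i).closure_subset_closure hsub <|
    ((hopt.1 i).fundCircuit_isCircuit hcl heI).mem_closure_sdiff_singleton_of_mem
      (Matroid.mem_fundCircuit ..)

theorem preimage_inter_exchangeable_subset_closure (hc : IsOptimalColoring M c)
    (hb : ReflTransGen (IsExchange M) c b) (i : ι) :
    b ⁻¹' {some i} ∩ exchangeable M c ⊆ (M i).closure (c ⁻¹' {some i} ∩ exchangeable M c) := by
  induction hb with
  | refl => exact (M i).subset_closure _ ((hc.1 i).inter_right _).subset_ground
  | @tail b b' hb hstep ih =>
    obtain ⟨hb', e, j, f, he, rfl⟩ := hstep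
    rintro x ⟨hx, hxD⟩
    obtain rfl | hij := eq_or_ne i j
    · have hxE := (hb' i).subset_ground hx
      rw [preimage_exchange_some_self] at hx
      obtain rfl | hxb := hx.1
      · exact (M i).closure_subset_closure_of_subset_closure ih
          (hc.mem_closure_preimage_inter_exchangeable hb he hxE)
      · exact ih ⟨hxb, hxD⟩
    · exact ih ⟨preimage_exchange_some_subset_of_ne b e f hij hx, hxD⟩

theorem exchangeable_inter_ground_subset_closure (hc : IsOptimalColoring M c) (i : ι) :
    exchangeable M c ∩ (M i).E ⊆ (M i).closure (c ⁻¹' {some i} ∩ exchangeable M c) := by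
  rintro x ⟨⟨b, hb, hx⟩, hxE⟩
  exact (M i).closure_subset_closure_of_subset_closure
    (hc.preimage_inter_exchangeable_subset_closure hb i)
    (hc.mem_closure_preimage_inter_exchangeable hb hx hxE)

theorem eRk_exchangeable (hc : IsOptimalColoring M c) (i : ι) :
    (M i).eRk (exchangeable M c) = (c ⁻¹' {some i} ∩ exchangeable M c).encard := by
  have hindep := (hc.1 i).inter_right (exchangeable M c)
  apply le_antisymm _ (hindep.encard_le_eRk_of_subset inter_subset_right)
  calc (M i).eRk (exchangeable M c)
      = (M i).eRk (exchangeable M c ∩ (M i).E) := ((M i).eRk_inter_ground _).symm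
    _ ≤ (M i).eRk ((M i).closure (c ⁻¹' {some i} ∩ exchangeable M c)) :=
        (M i).eRk_mono (hc.exchangeable_inter_ground_subset_closure i)
    _ = (c ⁻¹' {some i} ∩ exchangeable M c).encard := by
        rw [Matroid.eRk_closure_eq, hindep.eRk_eq_encard]

theorem encard_exchangeable [Fintype ι] (hc : IsOptimalColoring M c) :
    (exchangeable M c).encard =
      (c ⁻¹' {none}).encard + ∑ i, (M i).eRk (exchangeable M c) := by
  have hnone : c ⁻¹' {none} ⊆ exchangeable M c := fun x hx ↦ ⟨c, .refl, hx⟩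
  rw [encard_eq_sum_encard_preimage_inter c, Fintype.sum_option, inter_eq_left.2 hnone]
  simp only [hc.eRk_exchangeable]

theorem encard_preimage_none_le [Fintype ι] (hc : IsOptimalColoring M c) {L : ℕ∞}
    (h : ∀ J : Set α, J.encard ≤ L + ∑ i, (M i).eRk J) : (c ⁻¹' {none}).encard ≤ L := by
  have hfin : ∑ i, (M i).eRk (exchangeable M c) ≠ ⊤ :=
    ne_top_of_le_ne_top (toFinite (exchangeable M c)).encard_lt_top.ne
      (hc.encard_exchangeable ▸ le_add_self)
  exact (ENat.add_le_add_iff_right hfin).1 (hc.encard_exchangeable ▸ h _)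

end IsOptimalColoring

end PartialColoring

theorem exists_indep_partition_compl_iff {α ι : Type*} [Finite α] [Fintype ι]
    (M : ι → Matroid α) {L : ℕ∞} (hL : L ≤ ENat.card α) :
    (∃ H : Set α, H.encard = L ∧ ∃ I : ι → Set α,
        (∀ i j, i ≠ j → Disjoint (I i) (I j)) ∧ ⋃ i, I i = Hᶜ ∧ ∀ i, (M i).Indep (I i)) ↔
      ∀ J : Set α, J.encard ≤ L + ∑ i, (M i).eRk J := by
  constructor
  · rintro ⟨H, rfl, I, -, hunion, hI⟩ J
    exact encard_le_encard_add_sum_eRk hI (by simp [hunion])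
  · intro h
    obtain ⟨c, hc⟩ := PartialColoring.exists_isOptimalColoring M
    obtain ⟨H, hcH, -, hH⟩ := exists_superset_subset_encard_eq (subset_univ _)
      (hc.encard_preimage_none_le h) (by rwa [encard_univ])
    refine ⟨H, hH, fun i ↦ c ⁻¹' {some i} \ H, fun i j hij ↦ ?_, ?_, fun i ↦ (hc.1 i).sdiff H⟩
    · exact (pairwise_disjoint_fiber c (by simpa using hij)).mono sdiff_subset sdiff_subset
    · ext x
      have hx : x ∉ H → ∃ i, c x = some i := fun hxH ↦
        Option.ne_none_iff_exists'.1 fun hcx ↦ hxH (hcH hcx)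
      simpa using hx

section LinearMatroid

variable {K V α : Type*} [DivisionRing K] [AddCommGroup V] [Module K V]

theorem span_image_le_of_forall_mem_of_insert {φ : α → V} {I J : Set α}
    (hI : LinearIndepOn K φ I) (h : ∀ e ∈ J, LinearIndepOn K φ (insert e I) → e ∈ I) :
    Submodule.span K (φ '' J) ≤ Submodule.span K (φ '' I) := by
  rw [Submodule.span_le, image_subset_iff]
  exact fun e he ↦ hI.mem_span_iff.2 (h e he)

theorem exists_linearIndepOn_insert_of_encard_lt {φ : α → V} {I J : Set α}
    (hI : LinearIndepOn K φ I) (hJ : LinearIndepOn K φ J) (h : I.encard < J.encard) :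
    ∃ e ∈ J, e ∉ I ∧ LinearIndepOn K φ (insert e I) := by
  by_contra! hmax
  have hspan := span_image_le_of_forall_mem_of_insert hI fun e he hins ↦
    by_contra fun heI ↦ hmax e he heI hins
  apply h.not_ge
  rw [← toENat_rank_span_set hI, ← toENat_rank_span_set hJ]
  exact OrderHomClass.mono Cardinal.toENat (Submodule.rank_mono hspan)

variable (K) in
/-- The linear (vector) matroid of a family of vectors: a set of indices is independent when the
corresponding subfamily is linearly independent. -/
def linearMatroid (φ : α → V) : Matroid α :=
  (IndepMatroid.ofFinitaryCardAugment univ (LinearIndepOn K φ)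
    (linearIndepOn_empty K φ)
    (fun _ _ hJ hIJ ↦ hJ.mono hIJ)
    (fun _ _ hI hIfin hJ hJfin h ↦ exists_linearIndepOn_insert_of_encard_lt hI hJ <| by
      rwa [← hIfin.cast_ncard_eq, ← hJfin.cast_ncard_eq, Nat.cast_lt])
    (fun I ↦ linearIndepOn_of_finite I)
    (fun _ _ ↦ subset_univ _)).matroid

@[simp]
theorem linearMatroid_indep_iff {φ : α → V} {I : Set α} :
    (linearMatroid K φ).Indep I ↔ LinearIndepOn K φ I :=
  Iff.rfl

theorem linearMatroid_eRk (φ : α → V) (J : Set α) :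
    (linearMatroid K φ).eRk J = (Module.rank K (Submodule.span K (φ '' J))).toENat := by
  obtain ⟨I, hI⟩ := (linearMatroid K φ).exists_isBasis J (subset_univ J)
  have hindep : LinearIndepOn K φ I := hI.indep
  have hspan : Submodule.span K (φ '' J) = Submodule.span K (φ '' I) :=
    le_antisymm
      (span_image_le_of_forall_mem_of_insert hindep fun _ he hins ↦ hI.mem_of_insert_indep he hins)
      (Submodule.span_mono (image_mono hI.subset))
  rw [hspan, toENat_rank_span_set hindep, hI.encard_eq_eRk]

theorem linearMatroid_eRk_of_finite (φ : α → V) {J : Set α} (hJ : J.Finite) :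
    (linearMatroid K φ).eRk J = Module.finrank K (Submodule.span K (φ '' J)) := by
  have := FiniteDimensional.span_of_finite K (hJ.image φ)
  rw [linearMatroid_eRk, ← Module.finrank_eq_rank, Cardinal.toENat_nat]

end LinearMatroid

theorem generalized_rado_horn_general {K V α κ : Type*} [DivisionRing K] [AddCommGroup V]
    [Module K V] [Fintype α] [DecidableEq α] [Fintype κ] (L : ℕ) (hL : L ≤ Fintype.card α)
    (φ : α → V) :
    (∃ H : Finset α, H.card = L ∧
        ∃ A : κ → Finset α,
          (∀ i j, i ≠ j → Disjoint (A i) (A j)) ∧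
          (Finset.univ.biUnion A = Hᶜ) ∧
          (∀ i, LinearIndependent K (fun x : {y : α // y ∈ A i} => φ x.1))) ↔
      (∀ J : Finset α, (J.card : ℤ) - L ≤
        Fintype.card κ * Module.finrank K (Submodule.span K (φ '' ↑J))) := by
  have hsurj : Surjective ((↑) : Finset α → Set α) := Fintype.finsetEquivSet.surjective
  have hpartition := exists_indep_partition_compl_iff (fun _ : κ ↦ linearMatroid K φ)
    (L := L) (by simpa using hL)
  simp only [hsurj.exists, hsurj.comp_left.exists, hsurj.forall] at hpartition
  refine Iff.trans ?_ (hpartition.trans (forall_congr' fun J ↦ ?_))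
  · simp [← Finset.coe_inj, LinearIndepOn]
  · rw [linearMatroid_eRk_of_finite φ J.finite_toSet, encard_coe_eq_coe_finsetCard,
      Finset.sum_const, Finset.card_univ, nsmul_eq_mul, sub_le_iff_le_add']
    norm_cast

/-- **Generalized Rado–Horn theorem.**  For a finite family `φ : Fin M → V` and
`k, L ∈ ℕ` with `L ≤ M`, the following are equivalent: (i) there is a subset
`H` of the index set with `|H| = L` such that the subfamily indexed by the
complement of `H` can be partitioned into `k` linearly independent sets;
(ii) every subset `J` of the index set satisfies
`|J| − L ≤ k · dim span (φ j : j ∈ J)`. -/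
theorem generalized_rado_horn {K V : Type*} [Field K] [AddCommGroup V] [Module K V]
    {M : ℕ} (k L : ℕ) (hL : L ≤ M) (φ : Fin M → V) :
    (∃ H : Finset (Fin M), H.card = L ∧
        ∃ A : Fin k → Finset (Fin M),
          (∀ i j, i ≠ j → Disjoint (A i) (A j)) ∧
          (Finset.univ.biUnion A = Hᶜ) ∧
          (∀ i, LinearIndependent K (fun x : {y : Fin M // y ∈ A i} => φ x.1))) ↔
      (∀ J : Finset (Fin M),
        (J.card : ℤ) - L ≤ k * Module.finrank K (Submodule.span K (φ '' ↑J))) := by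
  simpa using generalized_rado_horn_general (κ := Fin k) L (by simpa using hL) φ
end
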